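/- Let q ∈ 𝕊 with re(q) = q₀, and suppose P ∈ 𝕊[x] is written as P(x) = Q(x) Ψ_q(x) + B x + A with Q ∈ 𝕊[x] and A, B = b₀ + b₁ i + b₂ j + b₃ k ∈ 𝕊, where B ≠ 0 and det(B) = 0. Suppose γ = γ₀ + γ₁ i with γ₀, γ₁ ∈ ℝ, γ₁ ≠ 0, satisfies A + B γ = 0. Set k₁ = −(b₀b₂ + b₁b₃)/(b₀² + b₁²), k₂ = (b₁b₂ − b₀b₃)/(b₀² + b₁²) and β = (dv(q) + (q₀ − γ₀)² − γ₁²)/(2γ₁). Then z₀ = q₀ + (β + γ₁) i + (k₂β + k₁(q₀ − γ₀)) j + (−k₁β + k₂(q₀ − γ₀)) k satisfies re(z₀) = q₀, det(z₀) = det(q) and P(z₀) = 0, and z₀ is the unique zero of P quasi-similar to q. -/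

import Mathlib

open Quaternion Polynomial

noncomputable section

/-- The real algebra of coquaternions (split quaternions):
basis `1, i, j, k` with `i² = -1`, `j² = k² = 1`, `ij = -ji = k`. -/
abbrev CoQ : Type := ℍ[ℝ, -1, 1]

/-- The determinant of a coquaternion: `det q = q₀² + q₁² - q₂² - q₃²` (equals `q * star q`). -/
def coDet (q : CoQ) : ℝ := q.re ^ 2 + q.imI ^ 2 - q.imJ ^ 2 - q.imK ^ 2

/-- The determinant of the vector part of a coquaternion: `dv q = q₁² - q₂² - q₃²`. -/
def coDv (q : CoQ) : ℝ := q.imI ^ 2 - q.imJ ^ 2 - q.imK ^ 2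

/-- The characteristic polynomial of the quasi-similarity class of `q`:
`Ψ_q(x) = x² - 2 re(q) x + det(q)`, a polynomial with real coefficients. -/
def charPoly (q : CoQ) : Polynomial CoQ :=
  X ^ 2 - C ((2 * q.re : ℝ) : CoQ) * X + C ((coDet q : ℝ) : CoQ)

theorem charPoly_eval_zero (q z : CoQ) (h0 : z.re = q.re) (h1 : coDet z = coDet q) :
    (charPoly q).eval z = 0 := by
  unfold charPoly
  rw [← h1, ← h0, two_mul]
  simp only [eval_add, eval_sub, eval_pow, eval_X, eval_C, eval_C_mul]
  unfold coDet
  ext <;> simp [pow_two] <;> ring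

theorem commute_coeff (q z : CoQ) (k : ℕ) : Commute ((charPoly q).coeff k) z := by
  unfold charPoly
  simp only [coeff_add, coeff_sub, coeff_X_pow, coeff_C_mul, coeff_X, coeff_C]
  refine Commute.add_left (Commute.sub_left ?_ (Commute.mul_left ?_ ?_)) ?_
  · split_ifs <;> simp
  · exact QuaternionAlgebra.coe_commute _ _
  · split_ifs <;> simp
  · split_ifs
    · exact QuaternionAlgebra.coe_commute _ _
    · simp

theorem eval_red (Q : Polynomial CoQ) (q A B z : CoQ) (h0 : z.re = q.re)
    (h1 : coDet z = coDet q) :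
    (Q * charPoly q + C B * X + C A).eval z = B * z + A := by
  have h : (Q * charPoly q).eval z = Q.eval z * (charPoly q).eval z :=
    eval₂_mul_noncomm (RingHom.id CoQ) z (fun k => commute_coeff q z k)
  rw [eval_add, eval_add, h, charPoly_eval_zero q z h0 h1]
  simp

/-- Case 3(c) (isolated zero): if `P = Q Ψ_q + B x + A` with `B ≠ 0` singular and
`A + B γ = 0` for `γ = γ₀ + γ₁ i` with `γ₁ ≠ 0`, then `z₀` below is the unique
zero of `P` quasi-similar to `q`. -/
theorem stmt_18 (P Q : Polynomial CoQ) (q A B : CoQ)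
    (hP : P = Q * charPoly q + C B * X + C A)
    (hB0 : B ≠ 0) (hBdet : coDet B = 0)
    (γ₀ γ₁ : ℝ) (hγ₁ : γ₁ ≠ 0)
    (hγ : A + B * (⟨γ₀, γ₁, 0, 0⟩ : CoQ) = 0)
    (k₁ k₂ β : ℝ)
    (hk₁ : k₁ = -((B.re * B.imJ + B.imI * B.imK) / (B.re ^ 2 + B.imI ^ 2)))
    (hk₂ : k₂ = (B.imI * B.imJ - B.re * B.imK) / (B.re ^ 2 + B.imI ^ 2))
    (hβ : β = (coDv q + (q.re - γ₀) ^ 2 - γ₁ ^ 2) / (2 * γ₁)) :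
    let z₀ : CoQ := ⟨q.re, β + γ₁, k₂ * β + k₁ * (q.re - γ₀), -k₁ * β + k₂ * (q.re - γ₀)⟩
    z₀.re = q.re ∧ coDet z₀ = coDet q ∧ P.eval z₀ = 0 ∧
      ∀ z : CoQ, z.re = q.re → coDet z = coDet q → P.eval z = 0 → z = z₀ := by
  intro z₀
  have hN : B.re ^ 2 + B.imI ^ 2 ≠ 0 := by
    intro hN
    apply hB0
    unfold coDet at hBdet
    have e0 : B.re = 0 := by nlinarith [sq_nonneg B.re, sq_nonneg B.imI]
    have e1 : B.imI = 0 := by nlinarith [sq_nonneg B.re, sq_nonneg B.imI]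
    have e2 : B.imJ = 0 := by nlinarith [sq_nonneg B.imJ, sq_nonneg B.imK]
    have e3 : B.imK = 0 := by nlinarith [sq_nonneg B.imJ, sq_nonneg B.imK]
    ext <;> simp [e0, e1, e2, e3]
  have hJ : B.imJ = -(k₁ * B.re - k₂ * B.imI) := by
    rw [hk₁, hk₂]; field_simp; ring
  have hK : B.imK = -(k₁ * B.imI + k₂ * B.re) := by
    rw [hk₁, hk₂]; field_simp; ring
  have hkk : k₁ ^ 2 + k₂ ^ 2 = 1 := by
    unfold coDet at hBdet
    rw [hJ, hK] at hBdet
    apply mul_left_cancel₀ hN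
    linear_combination -hBdet
  have hβ' : 2 * γ₁ * β = coDv q + (q.re - γ₀) ^ 2 - γ₁ ^ 2 := by
    rw [hβ]; field_simp
  unfold coDv at hβ'
  have hA : A = -(B * (⟨γ₀, γ₁, 0, 0⟩ : CoQ)) := eq_neg_of_add_eq_zero_left hγ
  have hdet : coDet z₀ = coDet q := by
    simp only [coDet, z₀]
    linear_combination hβ' - (β ^ 2 + (q.re - γ₀) ^ 2) * hkk
  refine ⟨rfl, hdet, ?_, ?_⟩
  · rw [hP, eval_red Q q A B z₀ rfl hdet, hA]
    ext
    · simp [z₀, hJ, hK]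
      linear_combination (-(q.re - γ₀) * B.re + β * B.imI) * hkk
    · simp [z₀, hJ, hK]
      linear_combination (-(q.re - γ₀) * B.imI - β * B.re) * hkk
    · simp [z₀, hJ, hK]
      ring
    · simp [z₀, hJ, hK]
      ring
  · intro z h0 h1 hz
    rw [hP, eval_red Q q A B z h0 h1, hA] at hz
    have ej := congrArg QuaternionAlgebra.imJ hz
    have ek := congrArg QuaternionAlgebra.imK hz
    simp [hJ, hK] at ej ek
    have f2 : z.imJ = k₂ * (z.imI - γ₁) + k₁ * (q.re - γ₀) := by
      rw [← h0]
      apply mul_left_cancel₀ hN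
      linear_combination B.re * ej + B.imI * ek
    have f3 : z.imK = -k₁ * (z.imI - γ₁) + k₂ * (q.re - γ₀) := by
      rw [← h0]
      apply mul_left_cancel₀ hN
      linear_combination B.re * ek - B.imI * ej
    have f1 : z.imI = β + γ₁ := by
      unfold coDet at h1
      rw [f2, f3, h0] at h1
      apply mul_left_cancel₀ (mul_ne_zero two_ne_zero hγ₁)
      linear_combination h1 - hβ' + ((z.imI - γ₁) ^ 2 + (q.re - γ₀) ^ 2) * hkk
    rw [f1] at f2 f3
    ext
    · exact h0
    · exact f1
    · simp only [z₀, f2]; ring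
    · simp only [z₀, f3]; ring
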